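/- arXiv:2605.30813 — 3 statements merged into one kernel-verified Lean document; each statement's English description precedes it below -/
import Mathlib

section
/- Single-merge boundary elimination: let r = (u, v) be a merge rule and φ any list of tokens. For every prefix μ of the list 𝕋_r(φ), there exists a (necessarily unique) prefix η of φ with π(η) = π(μ), and this η satisfies 𝕋_r(η) = μ. -/
/-!
Common BPE formalization preamble.

A token is a (nonempty) string over the alphabet `α`, modeled as `List α`.
A merge rule is a pair of tokens; a dictionary is an ordered list of rules
(earlier rules have strictly higher priority).
-/

namespace BPE

variable {α : Type*} [DecidableEq α]

/-- A token is a string over the alphabet (nonemptiness is imposed by hypotheses). -/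
abbrev Token (α : Type*) := List α

/-- A merge rule is an ordered pair of tokens. -/
abbrev Rule (α : Type*) := Token α × Token α

/-- A dictionary is an ordered list of merge rules; earlier = higher priority. -/
abbrev Dict (α : Type*) := List (Rule α)

/-- Apply a single merge rule to a token list, scanning left to right and replacing
each adjacent occurrence of `r.1` followed by `r.2` by the concatenated token,
resuming the scan after the newly formed token (no overlaps). -/
def applyRule (r : Rule α) : List (Token α) → List (Token α)
  | [] => []
  | [t] => [t]
  | t :: u :: rest =>
      if t = r.1 ∧ u = r.2 then (r.1 ++ r.2) :: applyRule r rest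
      else t :: applyRule r (u :: rest)

/-- `φ₀(s)`: the list of single-character tokens of `s`. -/
def phi0 (s : List α) : List (Token α) := s.map (fun c => [c])

/-- `φ_k(s)`: the token list after applying the first `k` rules of `D` to `s`. -/
def phiK (D : Dict α) (k : ℕ) (s : List α) : List (Token α) :=
  (D.take k).foldl (fun φ r => applyRule r φ) (phi0 s)

/-- The BPE tokenization `𝕋_D(s)`. -/
def tokenize (D : Dict α) (s : List α) : List (Token α) :=
  phiK D D.length s

/-- Detokenization `π`: concatenation of the tokens. -/
def detok (φ : List (Token α)) : List α := φ.flatten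

/-- A dictionary is valid if all rule components are genuine (nonempty) tokens. -/
def ValidDict (D : Dict α) : Prop := ∀ r ∈ D, r.1 ≠ [] ∧ r.2 ≠ []

/-- A token `t` is canonical if `𝕋_D(t) = [t]`. -/
def IsCanonical (D : Dict α) (t : Token α) : Prop := tokenize D t = [t]

/-- The last token `θ(s)`: last element of `𝕋_D(s)` (defaulting to `[]`). -/
def theta (D : Dict α) (s : List α) : Token α := (tokenize D s).getLastD []

/-- `j` (0-based) is the index of the canonical rule of `t`:
`φ_j(t)` has exactly two tokens and `φ_{j+1}(t) = [t]`. -/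
def IsCanonicalRuleIdx (D : Dict α) (t : Token α) (j : ℕ) : Prop :=
  j < D.length ∧ (phiK D j t).length = 2 ∧ phiK D (j + 1) t = [t]

open Classical in
/-- The (0-based) index of the canonical rule of `t` (junk value `0` if none exists). -/
noncomputable def canonIdx (D : Dict α) (t : Token α) : ℕ :=
  if h : ∃ j, IsCanonicalRuleIdx D t j then h.choose else 0

/-- Predecessor `pre(t)`: first token of the two-token stage `φ_{j-1}(t)`. -/
noncomputable def pre (D : Dict α) (t : Token α) : Token α :=
  (phiK D (canonIdx D t) t).headD []

/-- Successor `suc(t)`: second token of the two-token stage `φ_{j-1}(t)`. -/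
noncomputable def suc (D : Dict α) (t : Token α) : Token α :=
  (phiK D (canonIdx D t) t).getLastD []

/-- `InPath D x a` means `a ∈ P(x)`: `a` is obtained from `x` by iterating `suc`,
i.e. `a` lies on the ancestor path of `x` in the Successor Forest. -/
def InPath (D : Dict α) (x a : Token α) : Prop :=
  ∃ n : ℕ, (suc D)^[n] x = a

/-- `s` with the suffix `u` removed. -/
def dropSuffix (s u : List α) : List α := s.take (s.length - u.length)

/-- The Prefix Last-Token Condition of the canonical suffix token `t`
with respect to the string `s`. Atomic tokens satisfy it by definition;
a non-atomic token must satisfy Reachability and Priority dominance. -/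
def PLTC (D : Dict α) (s t : Token α) : Prop :=
  t.length = 1 ∨
    (1 < t.length ∧
      InPath D (theta D (dropSuffix s (suc D t))) (pre D t) ∧
      (theta D (dropSuffix s (suc D t)) ≠ pre D t →
        ∀ u : Token α, 1 < u.length → IsCanonical D u → suc D u = pre D t →
          InPath D (theta D (dropSuffix s (suc D t))) u →
          canonIdx D t < canonIdx D u))

/-!
The scan looks only one token ahead. Cutting `φ` at a boundary that survives in `𝕋_r(φ)` leaves
the lookahead of every earlier step unchanged, except that the last one may now see the end of the
list. So no merge is lost, because none crosses the cut, and none is created. Merging preserves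
detokenization, and since tokens are nonempty, distinct prefixes of `φ` detokenize to distinct
strings.
-/

theorem applyRule_merge (r : Rule α) (φ : List (Token α)) :
    applyRule r (r.1 :: r.2 :: φ) = (r.1 ++ r.2) :: applyRule r φ := by
  simp [applyRule]

theorem applyRule_cons_of_head?_ne {r : Rule α} {t : Token α} {φ : List (Token α)}
    (h : t = r.1 → φ.head? ≠ some r.2) :
    applyRule r (t :: φ) = t :: applyRule r φ := by
  cases φ <;> simp_all [applyRule]

theorem detok_applyRule (r : Rule α) (φ : List (Token α)) :
    detok (applyRule r φ) = detok φ := by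
  unfold detok
  induction φ using applyRule.induct (r := r) with
  | case1 => rw [applyRule]
  | case2 t => rw [applyRule]
  | case3 t u rest hmatch ih =>
    obtain ⟨rfl, rfl⟩ := hmatch
    simp only [applyRule_merge, List.flatten_cons, ih, List.append_assoc]
  | case4 t u rest hmatch ih =>
    simp only [applyRule, if_neg hmatch, List.flatten_cons, ih]

theorem exists_prefix_applyRule_eq {r : Rule α} {φ μ : List (Token α)}
    (hμ : μ <+: applyRule r φ) : ∃ η, η <+: φ ∧ applyRule r η = μ := by
  induction φ using applyRule.induct (r := r) generalizing μ with
  | case1 => exact ⟨μ, hμ, by rw [List.prefix_nil.mp hμ, applyRule]⟩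
  | case2 t =>
    refine ⟨μ, hμ, ?_⟩
    rcases List.prefix_cons_iff.mp hμ with rfl | ⟨ν, rfl, hν⟩
    · rw [applyRule]
    · rw [List.prefix_nil.mp hν, applyRule]
  | case3 t u rest hmatch ih =>
    obtain ⟨rfl, rfl⟩ := hmatch
    rw [applyRule_merge] at hμ
    rcases List.prefix_cons_iff.mp hμ with rfl | ⟨ν, rfl, hν⟩
    · exact ⟨[], List.nil_prefix, by rw [applyRule]⟩
    · obtain ⟨η, hη, rfl⟩ := ih hν
      exact ⟨r.1 :: r.2 :: η, by simpa using hη, applyRule_merge r η⟩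
  | case4 t u rest hmatch ih =>
    rw [applyRule, if_neg hmatch] at hμ
    rcases List.prefix_cons_iff.mp hμ with rfl | ⟨ν, rfl, hν⟩
    · exact ⟨[], List.nil_prefix, by rw [applyRule]⟩
    · obtain ⟨η, hη, rfl⟩ := ih hν
      have head_ne : t = r.1 → η.head? ≠ some r.2 := by
        intro ht hhead
        obtain ⟨η', rfl⟩ := List.head?_eq_some_iff.mp hhead
        exact hmatch ⟨ht, (List.cons_prefix_cons.mp hη).1.symm⟩
      exact ⟨t :: η, (List.prefix_cons_inj t).mpr hη, applyRule_cons_of_head?_ne head_ne⟩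

theorem eq_of_prefix_of_flatten_eq {β : Type*} {η η' : List (List β)} (h : η <+: η')
    (hne : ∀ t ∈ η', t ≠ []) (heq : η.flatten = η'.flatten) : η = η' := by
  obtain ⟨ζ, rfl⟩ := h
  have flatten_ζ : ζ.flatten = [] := by simpa using heq
  have ζ_nil : ζ = [] := List.eq_nil_iff_forall_not_mem.mpr fun t ht ↦
    hne t (List.mem_append_right η ht) (List.flatten_eq_nil_iff.mp flatten_ζ t ht)
  rw [ζ_nil, List.append_nil]

theorem eq_of_prefix_of_prefix_of_flatten_eq {β : Type*} {φ η η' : List (List β)}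
    (hφ : ∀ t ∈ φ, t ≠ []) (hη : η <+: φ) (hη' : η' <+: φ)
    (heq : η.flatten = η'.flatten) : η = η' := by
  rcases List.prefix_or_prefix_of_prefix hη hη' with h | h
  · exact eq_of_prefix_of_flatten_eq h (fun t ht ↦ hφ t (hη'.subset ht)) heq
  · exact (eq_of_prefix_of_flatten_eq h (fun t ht ↦ hφ t (hη.subset ht)) heq.symm).symm

theorem single_merge_boundary_elimination_general (r : Rule α)
    (φ : List (Token α)) (hφ : ∀ t ∈ φ, t ≠ [])
    (μ : List (Token α)) (hμ : μ <+: applyRule r φ) :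
    ∃ η, η <+: φ ∧ detok η = detok μ ∧ applyRule r η = μ ∧
      ∀ η', η' <+: φ → detok η' = detok μ → η' = η := by
  obtain ⟨η, hη, rfl⟩ := exists_prefix_applyRule_eq hμ
  have detok_eq : detok η = detok (applyRule r η) := (detok_applyRule r η).symm
  exact ⟨η, hη, detok_eq, rfl, fun η' hη' heq ↦
    eq_of_prefix_of_prefix_of_flatten_eq hφ hη' hη (heq.trans detok_eq.symm)⟩

/-- **Single-merge boundary elimination.** For every prefix `μ` of `𝕋_r(φ)`,
there is a (necessarily unique) prefix `η` of `φ` with `π(η) = π(μ)`,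
and this `η` satisfies `𝕋_r(η) = μ`. -/
theorem single_merge_boundary_elimination [Fintype α] (r : Rule α)
    (hr1 : r.1 ≠ []) (hr2 : r.2 ≠ [])
    (φ : List (Token α)) (hφ : ∀ t ∈ φ, t ≠ [])
    (μ : List (Token α)) (hμ : μ <+: applyRule r φ) :
    ∃ η, η <+: φ ∧ detok η = detok μ ∧ applyRule r η = μ ∧
      ∀ η', η' <+: φ → detok η' = detok μ → η' = η :=
  single_merge_boundary_elimination_general r φ hφ μ hμ

end BPE
end

section
/- Canonicity of output tokens: for every string s, every token t occurring as an element of the list 𝕋_D(s) is canonical, i.e., satisfies 𝕋_D(t) = [t]. -/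
/-!
Common BPE formalization preamble.

A token is a (nonempty) string over the alphabet `α`, modeled as `List α`.
A merge rule is a pair of tokens; a dictionary is an ordered list of rules
(earlier rules have strictly higher priority).
-/

namespace BPE

variable {α : Type*} [DecidableEq α]

/-!
Any cut between two output tokens of a BPE step comes from a cut between two input tokens. No merge
crosses that cut, and the left-to-right scan resumes right at it, so the step acts on the two sides
independently. Hence any run of consecutive output tokens is itself the tokenization of some string,
and since merging preserves the underlying string, that string is the concatenation of the run.
Canonicity is the case of a run of length one.
-/

section LiftsAppend

variable {β γ δ ι : Type*}

/-- `f` lifts concatenations if every way of cutting an output `f φ` in two comes from a cut of the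
input `φ` whose two pieces are mapped separately to the two pieces of the output. The converse
`f (φ₁ ++ φ₂) = f φ₁ ++ f φ₂` is not required, as it fails for merge rules. -/
def LiftsAppend (f : List β → List γ) : Prop :=
  ∀ ⦃φ ψ₁ ψ₂⦄, f φ = ψ₁ ++ ψ₂ → ∃ φ₁ φ₂, φ = φ₁ ++ φ₂ ∧ f φ₁ = ψ₁ ∧ f φ₂ = ψ₂

theorem LiftsAppend.comp {g : List γ → List δ} {f : List β → List γ}
    (hg : LiftsAppend g) (hf : LiftsAppend f) : LiftsAppend (g ∘ f) := by
  intro φ χ₁ χ₂ h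
  obtain ⟨ψ₁, ψ₂, hψ, rfl, rfl⟩ := hg h
  obtain ⟨φ₁, φ₂, rfl, rfl, rfl⟩ := hf hψ
  exact ⟨φ₁, φ₂, rfl, rfl, rfl⟩

theorem LiftsAppend.foldl {f : List β → ι → List β} (hf : ∀ i, LiftsAppend (f · i))
    (l : List ι) : LiftsAppend (l.foldl f) := by
  induction l with
  | nil => exact fun _ ψ₁ ψ₂ h => ⟨ψ₁, ψ₂, h, rfl, rfl⟩
  | cons i l ih => exact ih.comp (hf i)

theorem LiftsAppend.map (f : β → γ) : LiftsAppend (List.map f) :=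
  fun _ _ _ h => List.map_eq_append_iff.1 h

theorem LiftsAppend.exists_eq_of_infix {f : List β → List γ} (hf : LiftsAppend f)
    {φ : List β} {ψ : List γ} (h : ψ <:+: f φ) : ∃ φ', φ' <:+: φ ∧ f φ' = ψ := by
  obtain ⟨ψ₁, ψ₂, h⟩ := h
  obtain ⟨φ₁₂, φ₃, rfl, h₁₂, -⟩ := hf h.symm
  obtain ⟨φ₁, φ₂, rfl, -, h₂⟩ := hf h₁₂
  exact ⟨φ₂, ⟨φ₁, φ₃, rfl⟩, h₂⟩

end LiftsAppend

theorem liftsAppend_applyRule (r : Rule α) : LiftsAppend (applyRule r) := by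
  intro φ ψ₁ ψ₂ h
  induction φ using applyRule.induct (r := r) generalizing ψ₁ with
  | case1 =>
    obtain ⟨rfl, rfl⟩ := List.append_eq_nil_iff.1 h.symm
    exact ⟨[], [], rfl, rfl, rfl⟩
  | case2 t =>
    rcases List.append_eq_singleton_iff.1 h.symm with ⟨rfl, rfl⟩ | ⟨rfl, rfl⟩
    · exact ⟨[], [t], rfl, rfl, rfl⟩
    · exact ⟨[t], [], rfl, rfl, rfl⟩
  | case3 t u φ merge ih =>
    rcases List.append_eq_cons_iff.1 ((if_pos merge).symm.trans h).symm with
      ⟨rfl, rfl⟩ | ⟨ψ₁, rfl, hψ⟩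
    · exact ⟨[], t :: u :: φ, rfl, rfl, if_pos merge⟩
    · obtain ⟨φ₁, φ₂, rfl, rfl, rfl⟩ := ih hψ
      exact ⟨t :: u :: φ₁, φ₂, rfl, if_pos merge, rfl⟩
  | case4 t u φ no_merge ih =>
    rcases List.append_eq_cons_iff.1 ((if_neg no_merge).symm.trans h).symm with
      ⟨rfl, rfl⟩ | ⟨ψ₁, rfl, hψ⟩
    · exact ⟨[], t :: u :: φ, rfl, rfl, if_neg no_merge⟩
    · obtain ⟨φ₁, φ₂, hφ, rfl, rfl⟩ := ih hψ
      have no_merge' : t = r.1 → φ₁.head? ≠ some r.2 := by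
        intro ht hu
        have : u = r.2 := by simpa [hu] using congrArg List.head? hφ
        exact no_merge ⟨ht, this⟩
      exact ⟨t :: φ₁, φ₂, congrArg (t :: ·) hφ, applyRule_cons_of_head?_ne no_merge', rfl⟩

theorem liftsAppend_phiK (D : Dict α) (k : ℕ) : LiftsAppend (phiK D k) :=
  (LiftsAppend.foldl liftsAppend_applyRule (D.take k)).comp (LiftsAppend.map fun c => [c])

omit [DecidableEq α] in
theorem detok_phi0 (s : List α) : detok (phi0 s) = s :=
  List.flatMap_singleton' s

theorem detok_phiK (D : Dict α) (k : ℕ) (s : List α) : detok (phiK D k s) = s :=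
  List.foldlRecOn (D.take k) _ (motive := fun φ => detok φ = s) (detok_phi0 s)
    fun φ hφ r _ => (detok_applyRule r φ).trans hφ

theorem phiK_detok_of_infix {D : Dict α} {k : ℕ} {s : List α} {φ : List (Token α)}
    (h : φ <:+: phiK D k s) : phiK D k (detok φ) = φ := by
  obtain ⟨s', -, rfl⟩ := (liftsAppend_phiK D k).exists_eq_of_infix h
  rw [detok_phiK]

theorem output_tokens_canonical_general {D : Dict α} {s : List α} {t : Token α}
    (ht : t ∈ tokenize D s) : IsCanonical D t := by
  have h : tokenize D (detok [t]) = [t] :=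
    phiK_detok_of_infix ((List.singleton_infix_iff t _).2 ht)
  rwa [detok, List.flatten_singleton] at h

/-- **Canonicity of output tokens.** Every token occurring in `𝕋_D(s)` is canonical. -/
theorem output_tokens_canonical [Fintype α] (D : Dict α) (hD : ValidDict D)
    (s : List α) (t : Token α) (ht : t ∈ tokenize D s) :
    tokenize D t = [t] :=
  output_tokens_canonical_general ht

end BPE
end

section
/- Structure of the Suffix-Successor Tree: let k be a canonical token. (i) If u is a non-atomic canonical token that is a suffix of k, then suc(u) is also a canonical suffix of k. (ii) Consequently, for every canonical suffix u of k, the entire ancestor path P(u) consists of canonical suffixes of k and terminates at the unique atomic suffix of k (the single-character token formed by the last character of k); hence SufSucTree(k) is a single tree rooted at this atomic token. -/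
/-!
Common BPE formalization preamble.

A token is a (nonempty) string over the alphabet `α`, modeled as `List α`.
A merge rule is a pair of tokens; a dictionary is an ordered list of rules
(earlier rules have strictly higher priority).
-/

namespace BPE

variable {α : Type*} [DecidableEq α]

/-!
A suffix of a stage of BPE is itself a stage of BPE: if `ψ` is a suffix of `φ_j(s)`, then
`ψ = φ_j(ψ.flatten)`. A left-to-right scan does what it does on the tokens to the right of a
boundary in its output independently of those to the left, so this propagates backwards through the
rules. Applied to the one-element suffix, it says that the last token `t` of any stage satisfies
`φ_j(t) = [t]`, and since rules leave a single token alone, `t` is canonical.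

Now `suc u` is the last token of a stage of `u`, hence a canonical suffix of `u`. When `u` is
canonical and non-atomic, that stage has two nonempty tokens, so `suc u` is strictly shorter than
`u`; iterating `suc` must therefore end at an atomic suffix.
-/

theorem singleton_getLastD_suffix {β : Type*} {l : List β} (hl : l ≠ []) (b : β) :
    [l.getLastD b] <:+ l := by
  rw [List.singleton_suffix_iff_getLast?_eq_some, List.getLastD_eq_getLast?,
    List.getLast?_eq_some_getLast hl, Option.getD_some]

section ApplyRule

variable {r : Rule α} {φ ψ : List (Token α)}

theorem flatten_applyRule (r : Rule α) (φ : List (Token α)) :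
    (applyRule r φ).flatten = φ.flatten := by
  fun_induction applyRule r φ with
  | case1 | case2 => rfl
  | case3 _ _ _ h ih => simp [h.1, h.2, ih]
  | case4 _ _ _ _ ih => simp [ih]

theorem length_le_two_mul_length_applyRule (r : Rule α) (φ : List (Token α)) :
    φ.length ≤ 2 * (applyRule r φ).length := by
  fun_induction applyRule r φ with
  | case1 | case2 => simp
  | case3 | case4 => grind

theorem nil_notMem_applyRule (hφ : [] ∉ φ) : [] ∉ applyRule r φ := by
  fun_induction applyRule r φ with
  | case1 | case2 => exact hφ
  | case3 | case4 => grind [List.append_eq_nil_iff]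

theorem exists_suffix_applyRule_eq (h : ψ <:+ applyRule r φ) :
    ∃ φ', φ' <:+ φ ∧ applyRule r φ' = ψ := by
  fun_induction applyRule r φ with
  | case1 => exact ⟨[], List.suffix_rfl, (List.suffix_nil.1 h).symm⟩
  | case2 t =>
    rcases List.suffix_cons_iff.1 h with rfl | h
    · exact ⟨[t], List.suffix_rfl, rfl⟩
    · exact ⟨[], List.nil_suffix, (List.suffix_nil.1 h).symm⟩
  | case3 t u rest htu ih =>
    rcases List.suffix_cons_iff.1 h with rfl | h
    · exact ⟨t :: u :: rest, List.suffix_rfl, if_pos htu⟩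
    · obtain ⟨φ', hφ', rfl⟩ := ih h
      exact ⟨φ', hφ'.trans (List.suffix_append [t, u] rest), rfl⟩
  | case4 t u rest htu ih =>
    rcases List.suffix_cons_iff.1 h with rfl | h
    · exact ⟨t :: u :: rest, List.suffix_rfl, if_neg htu⟩
    · obtain ⟨φ', hφ', rfl⟩ := ih h
      exact ⟨φ', hφ'.trans (List.suffix_cons t (u :: rest)), rfl⟩

theorem exists_suffix_foldl_applyRule_eq {D : Dict α}
    (h : ψ <:+ D.foldl (fun φ r ↦ applyRule r φ) φ) :
    ∃ φ', φ' <:+ φ ∧ D.foldl (fun φ r ↦ applyRule r φ) φ' = ψ := by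
  induction D generalizing φ with
  | nil => exact ⟨ψ, h, rfl⟩
  | cons r D ih =>
    obtain ⟨φ₁, hφ₁, rfl⟩ := ih h
    obtain ⟨φ', hφ', rfl⟩ := exists_suffix_applyRule_eq hφ₁
    exact ⟨φ', hφ', rfl⟩

end ApplyRule

section Stages

variable {D : Dict α} {s : List α} {t : Token α} {i j : ℕ} {ψ : List (Token α)}

theorem phiK_succ (hj : j < D.length) (s : List α) :
    phiK D (j + 1) s = applyRule D[j] (phiK D j s) := by
  simp only [phiK, List.take_succ_eq_append_getElem hj, List.foldl_append, List.foldl_cons,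
    List.foldl_nil]

theorem flatten_phiK (D : Dict α) (j : ℕ) (s : List α) : (phiK D j s).flatten = s :=
  List.foldlRecOn (motive := fun φ ↦ φ.flatten = s) _ _
    (by simp [phi0, ← List.flatMap_def]) fun φ hφ r _ ↦ (flatten_applyRule r φ).trans hφ

theorem nil_notMem_phiK (D : Dict α) (j : ℕ) (s : List α) : [] ∉ phiK D j s :=
  List.foldlRecOn (motive := fun φ ↦ [] ∉ φ) _ _ (by simp [phi0])
    fun _ hφ _ _ ↦ nil_notMem_applyRule hφ

theorem phiK_eq_singleton_of_le (hij : i ≤ j) (h : phiK D i s = [t]) : phiK D j s = [t] := by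
  obtain ⟨E, hE⟩ := List.take_prefix_take_left (l := D) hij
  have hj : phiK D j s = E.foldl (fun φ r ↦ applyRule r φ) (phiK D i s) := by
    simp only [phiK, ← hE, List.foldl_append]
  rw [hj, h]
  exact List.foldlRecOn (motive := (· = [t])) _ _ rfl fun φ hφ r _ ↦ by rw [hφ, applyRule]

theorem phiK_eq_tokenize (hj : D.length ≤ j) (s : List α) : phiK D j s = tokenize D s := by
  rw [tokenize, phiK, phiK, List.take_of_length_le hj, List.take_length]

theorem isCanonical_of_phiK_eq_singleton (h : phiK D j t = [t]) : IsCanonical D t := by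
  rcases le_total j D.length with hj | hj
  · exact phiK_eq_singleton_of_le hj h
  · exact (phiK_eq_tokenize hj t).symm.trans h

theorem phiK_flatten_of_suffix (h : ψ <:+ phiK D j s) : phiK D j ψ.flatten = ψ := by
  obtain ⟨φ, hφ, hφψ⟩ := exists_suffix_foldl_applyRule_eq h
  obtain ⟨s', -, rfl⟩ := List.suffix_map_iff.1 hφ
  have hs' : phiK D j s' = ψ := hφψ
  rw [← hs', flatten_phiK]

theorem phiK_ne_nil (D : Dict α) (j : ℕ) (hs : s ≠ []) : phiK D j s ≠ [] :=
  fun h ↦ hs (by rw [← flatten_phiK D j s, h, List.flatten_nil])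

theorem phiK_eq_singleton_self (h : (phiK D j s).length = 1) : phiK D j s = [s] := by
  obtain ⟨t, ht⟩ := List.length_eq_one_iff.1 h
  have hts : t = s := by simpa [ht] using flatten_phiK D j s
  rw [ht, hts]

theorem getLastD_phiK_suffix (D : Dict α) (j : ℕ) (s : List α) :
    (phiK D j s).getLastD [] <:+ s := by
  by_cases hφ : phiK D j s = []
  · rw [hφ]
    exact List.nil_suffix
  · simpa [flatten_phiK] using (singleton_getLastD_suffix hφ []).flatten

theorem isCanonical_getLastD_phiK (D : Dict α) (j : ℕ) (hs : s ≠ []) :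
    IsCanonical D ((phiK D j s).getLastD []) :=
  isCanonical_of_phiK_eq_singleton <| by
    simpa using phiK_flatten_of_suffix (singleton_getLastD_suffix (phiK_ne_nil D j hs) [])

end Stages

section Successor

variable {D : Dict α} {u : Token α}

theorem IsCanonical.ne_nil (hu : IsCanonical D u) : u ≠ [] := by
  rintro rfl
  exact nil_notMem_phiK D D.length [] (by rw [← tokenize, hu]; exact List.mem_singleton_self [])

theorem exists_isCanonicalRuleIdx (hu : IsCanonical D u) (hlen : 1 < u.length) :
    ∃ j, IsCanonicalRuleIdx D u j := by
  have h0 : phiK D 0 u ≠ [u] := fun h ↦ by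
    have : u.length = 1 := by simpa [phiK, phi0] using congrArg List.length h
    omega
  obtain ⟨j, hj, hj'⟩ := Nat.exists_not_and_succ_of_not_zero_of_exists
    (p := fun j ↦ phiK D j u = [u]) h0 ⟨D.length, hu⟩
  have hjD : j < D.length := not_le.1 fun hDj ↦ hj ((phiK_eq_tokenize hDj u).trans hu)
  have hle : (phiK D j u).length ≤ 2 := by
    simpa [← phiK_succ hjD, hj'] using length_le_two_mul_length_applyRule D[j] (phiK D j u)
  have hpos := List.length_pos_iff.2 (phiK_ne_nil D j hu.ne_nil)
  have hne : (phiK D j u).length ≠ 1 := fun h ↦ hj (phiK_eq_singleton_self h)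
  exact ⟨j, hjD, by omega, hj'⟩

theorem isCanonicalRuleIdx_canonIdx (hu : IsCanonical D u) (hlen : 1 < u.length) :
    IsCanonicalRuleIdx D u (canonIdx D u) := by
  have hex := exists_isCanonicalRuleIdx hu hlen
  rw [canonIdx, dif_pos hex]
  exact hex.choose_spec

theorem phiK_canonIdx (hu : IsCanonical D u) (hlen : 1 < u.length) :
    phiK D (canonIdx D u) u = [pre D u, suc D u] := by
  obtain ⟨x, y, hxy⟩ := List.length_eq_two.1 (isCanonicalRuleIdx_canonIdx hu hlen).2.1
  rw [pre, suc, hxy]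
  rfl

theorem pre_append_suc (hu : IsCanonical D u) (hlen : 1 < u.length) :
    pre D u ++ suc D u = u := by
  simpa [phiK_canonIdx hu hlen] using flatten_phiK D (canonIdx D u) u

theorem pre_ne_nil (hu : IsCanonical D u) (hlen : 1 < u.length) : pre D u ≠ [] := by
  intro h
  apply nil_notMem_phiK D (canonIdx D u) u
  simp [phiK_canonIdx hu hlen, h]

theorem length_suc_lt (hu : IsCanonical D u) (hlen : 1 < u.length) :
    (suc D u).length < u.length := by
  have hsum := congrArg List.length (pre_append_suc hu hlen)
  have hpos := List.length_pos_iff.2 (pre_ne_nil hu hlen)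
  rw [List.length_append] at hsum
  omega

theorem suc_suffix (D : Dict α) (u : Token α) : suc D u <:+ u :=
  getLastD_phiK_suffix D (canonIdx D u) u

theorem isCanonical_suc (D : Dict α) (hu : u ≠ []) : IsCanonical D (suc D u) :=
  isCanonical_getLastD_phiK D (canonIdx D u) hu

end Successor

section AncestorPath

variable {D : Dict α} {u a : Token α}

theorem InPath.suffix (h : InPath D u a) : a <:+ u := by
  obtain ⟨n, rfl⟩ := h
  exact Function.Iterate.rec (· <:+ u) List.suffix_rfl (fun a ha ↦ (suc_suffix D a).trans ha) n

theorem InPath.isCanonical (h : InPath D u a) (hu : IsCanonical D u) : IsCanonical D a := by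
  obtain ⟨n, rfl⟩ := h
  exact Function.Iterate.rec (IsCanonical D) hu (fun _ ha ↦ isCanonical_suc D ha.ne_nil) n

theorem inPath_singleton_getLast (hu : IsCanonical D u) : InPath D u [u.getLast hu.ne_nil] := by
  induction hl : u.length using Nat.strong_induction_on generalizing u with
  | _ l ih =>
    have hpos : 1 ≤ u.length := List.length_pos_iff.2 hu.ne_nil
    rcases hpos.eq_or_lt' with hone | hlen
    · obtain ⟨c, rfl⟩ := List.length_eq_one_iff.1 hone
      exact ⟨0, rfl⟩
    · have hsuc := isCanonical_suc D hu.ne_nil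
      obtain ⟨n, hn⟩ := ih _ (hl ▸ length_suc_lt hu hlen) hsuc rfl
      exact ⟨n + 1, by rw [Function.iterate_succ_apply, hn, (suc_suffix D u).getLast hsuc.ne_nil]⟩

end AncestorPath

theorem sufsuctree_structure_general (D : Dict α) (k : Token α) (hk : k ≠ []) :
    (∀ u : Token α, IsCanonical D u → 1 < u.length → u <:+ k →
        IsCanonical D (suc D u) ∧ suc D u <:+ k) ∧
    (∀ u : Token α, IsCanonical D u → u <:+ k →
        (∀ a : Token α, InPath D u a → IsCanonical D a ∧ a <:+ k) ∧
        InPath D u [k.getLast hk]) := by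
  refine ⟨fun u hu _ huk ↦ ⟨isCanonical_suc D hu.ne_nil, (suc_suffix D u).trans huk⟩,
    fun u hu huk ↦ ⟨fun a ha ↦ ⟨ha.isCanonical hu, ha.suffix.trans huk⟩, ?_⟩⟩
  rw [← huk.getLast hu.ne_nil]
  exact inPath_singleton_getLast hu

/-- **Structure of the Suffix-Successor Tree.** Let `k` be a canonical token.
(i) If `u` is a non-atomic canonical suffix of `k`, then `suc u` is a canonical suffix
of `k`. (ii) For every canonical suffix `u` of `k`, every node on the ancestor path
`P(u)` is a canonical suffix of `k`, and the path reaches the unique atomic suffix of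
`k` (the single-character token formed by the last character of `k`);
hence `SufSucTree(k)` is a single tree rooted at this atomic token. -/
theorem sufsuctree_structure [Fintype α] (D : Dict α) (hD : ValidDict D)
    (k : Token α) (hk : k ≠ []) (hkc : IsCanonical D k) :
    (∀ u : Token α, IsCanonical D u → 1 < u.length → u <:+ k →
        IsCanonical D (suc D u) ∧ suc D u <:+ k) ∧
    (∀ u : Token α, IsCanonical D u → u <:+ k →
        (∀ a : Token α, InPath D u a → IsCanonical D a ∧ a <:+ k) ∧
        InPath D u [k.getLast hk]) :=
  sufsuctree_structure_general D k hk

end BPE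
end
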